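/- Let p be a prime with p ≡ 3 (mod 4). Let q_o(p) and q_e(p) be, respectively, the number of odd and even quadratic residues mod p in the set {1, 2, …, p-1}. If p ≡ 3 (mod 8) then q_o(p) > q_e(p), and if p ≡ 7 (mod 8) then q_e(p) > q_o(p). -/

import Mathlib

/-- The number of odd quadratic residues mod `p` in `{1, 2, …, p-1}`. -/
def qo (p : ℕ) : ℕ :=
  ((Finset.Icc 1 (p - 1)).filter
    (fun k => Odd k ∧ ∃ x ∈ Finset.range p, x * x % p = k % p)).card

/-- The number of even quadratic residues mod `p` in `{1, 2, …, p-1}`. -/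
def qe (p : ℕ) : ℕ :=
  ((Finset.Icc 1 (p - 1)).filter
    (fun k => Even k ∧ ∃ x ∈ Finset.range p, x * x % p = k % p)).card

/-! Let `χ` be the quadratic character mod `p` and `T = ∑ χ(x) x` over `0 < x < p`. The substitution
`x ↦ 2x` gives `(2 χ(2) - 1) T = p ∑_{x odd} χ(x)`, and as `χ(-1) = -1` the reflection `x ↦ p - x`
turns even residues into odd nonresidues, so the last sum is `q_o(p) - q_e(p)`. Since `χ(2) = ∓1`
according to `p ≡ 3, 7 (mod 8)`, everything reduces to `T < 0`. Evaluating
`∑ χ(j) log (1 - e^{2πij/p})` gives `g L(1, χ) = -(πi/p) T` with `g` the Gauss sum of `χ`. Here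
`L(1, χ) > 0` by the Euler product and non-vanishing, and `g = i√p` by Gauss.

The sign of `g` is found as Kronecker did. The product `∏ (ζ^{-k/2} - ζ^{k/2})` over
`1 ≤ k ≤ (p-1)/2` has the same square as `g`; if it were `-g`, then comparing Taylor coefficients of
order `(p-1)/2` at `ζ = 1` modulo `p` would give `-2 = 0`. At `ζ = e^{2πi/p}` every factor is a
known power of `i` times a positive sine.
-/

section PowerSums

open Polynomial Finset

theorem sum_pow_card_sub_one_eq_neg_one {F : Type*} [Field F] [Fintype F] :
    ∑ x : F, x ^ (Fintype.card F - 1) = -1 := by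
  classical
  have hq : Fintype.card F - 1 ≠ 0 := Nat.sub_ne_zero_of_lt Fintype.one_lt_card
  rw [← add_sum_erase univ _ (mem_univ 0), zero_pow hq, zero_add,
    sum_congr rfl fun x hx ↦ FiniteField.pow_card_sub_one_eq_one x (ne_of_mem_erase hx), sum_const,
    card_erase_of_mem (mem_univ 0), card_univ, nsmul_one, Nat.cast_sub Fintype.card_pos,
    FiniteField.cast_card_eq_zero, Nat.cast_one, zero_sub]

theorem sum_eval_eq_neg_coeff {F : Type*} [Field F] [Fintype F] {f : F[X]}
    (hf : f.natDegree < Fintype.card F) :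
    ∑ x, f.eval x = -f.coeff (Fintype.card F - 1) := by
  obtain ⟨n, hn⟩ : ∃ n, Fintype.card F = n + 1 := Nat.exists_eq_add_one.mpr Fintype.card_pos
  have hlow (i : ℕ) (hi : i ∈ range n) : ∑ x : F, f.coeff i * x ^ i = 0 := by
    rw [← mul_sum, FiniteField.sum_pow_lt_card_sub_one F i (by grind), mul_zero]
  have htop := sum_pow_card_sub_one_eq_neg_one (F := F)
  simp_rw [eval_eq_sum_range' hf]
  rw [sum_comm, hn, sum_range_succ, sum_eq_zero hlow, ← mul_sum]
  simp only [hn, Nat.add_sub_cancel] at htop ⊢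
  rw [htop, zero_add, mul_neg_one]

end PowerSums

section LegendreChar

/-- The Legendre symbol `(· / p)` as a Dirichlet character with values in `R`; an `abbrev`, so that
the `MulChar` API for the quadratic character applies to it directly. -/
noncomputable abbrev legendreChar (p : ℕ) [Fact p.Prime] (R : Type*) [CommRing R] :
    DirichletCharacter R p :=
  (quadraticChar (ZMod p)).ringHomComp (Int.castRingHom R)

variable {p : ℕ} [Fact p.Prime]

theorem legendreChar_isQuadratic (R : Type*) [CommRing R] : (legendreChar p R).IsQuadratic :=
  (quadraticChar_isQuadratic (ZMod p)).comp _

theorem legendreChar_ne_one (hp : p ≠ 2) (R : Type*) [CommRing R] [CharZero R] :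
    legendreChar p R ≠ 1 :=
  (MulChar.ringHomComp_ne_one_iff (RingHom.injective_int _)).mpr
    (quadraticChar_ne_one ((ZMod.ringChar_zmod_n p).trans_ne hp))

theorem legendreChar_neg_one (hp : p ≠ 2) (R : Type*) [CommRing R] :
    legendreChar p R (-1) = (-1) ^ (p / 2) := by
  have hodd : p % 2 = 1 := (Fact.out : p.Prime).eq_two_or_odd.resolve_left hp
  rw [MulChar.ringHomComp_apply, quadraticChar_neg_one ((ZMod.ringChar_zmod_n p).trans_ne hp),
    ZMod.card, ZMod.χ₄_eq_neg_one_pow hodd, map_pow, map_neg, map_one]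

end LegendreChar

section KroneckerProduct

open Polynomial Finset

/-- The polynomial `∑ χ(x) X ^ x`, whose value at a `p`-th root of unity is the Gauss sum of the
quadratic character `χ` mod `p`. The exponents are the representatives in `[0, p)`. -/
noncomputable def gaussPoly (p : ℕ) [Fact p.Prime] : ℤ[X] :=
  ∑ x : ZMod p, C (quadraticChar (ZMod p) x) * X ^ x.val

/-- Kronecker's product `∏ (ζ^{-k/2} - ζ^{k/2})` over `1 ≤ k ≤ m`, for `ζ` a root of unity of odd
order `2 * m + 1`, as a polynomial in `ζ`: halving modulo `2 * m + 1` is multiplication by `m + 1`,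
and `m` plays the role of `-1/2`. -/
noncomputable def kroneckerPoly (m : ℕ) : ℤ[X] :=
  ∏ k ∈ range m, (X ^ (m * (k + 1)) - X ^ ((m + 1) * (k + 1)))

variable {p m : ℕ} [Fact p.Prime]

theorem aeval_one_iterate_derivative_gaussPoly (hpm : p = 2 * m + 1) :
    aeval (1 : ZMod p) (derivative^[m] (gaussPoly p)) = -1 := by
  have hp2 : ringChar (ZMod p) ≠ 2 := by rw [ZMod.ringChar_zmod_n]; omega
  have hterm (x : ZMod p) :
      aeval (1 : ZMod p) (derivative^[m] (C (quadraticChar (ZMod p) x) * X ^ x.val)) =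
        (X ^ m * descPochhammer (ZMod p) m).eval x := by
    rw [iterate_derivative_C_mul, iterate_derivative_X_pow_eq_natCast_mul]
    have hdesc := descPochhammer_eval_eq_descFactorial (ZMod p) x.val m
    rw [ZMod.natCast_zmod_val] at hdesc
    have hχ := quadraticChar_eq_pow_of_char_ne_two' hp2 x
    rw [ZMod.card, show p / 2 = m by omega] at hχ
    rw [map_mul, map_mul, aeval_C, algebraMap_int_eq, eq_intCast, hχ]
    simp [hdesc]
  have hmonic : (X ^ m * descPochhammer (ZMod p) m).Monic :=
    (monic_X_pow m).mul (monic_descPochhammer _ m)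
  have hdeg : (X ^ m * descPochhammer (ZMod p) m).natDegree = p - 1 := by
    rw [(monic_X_pow m).natDegree_mul (monic_descPochhammer _ m), natDegree_X_pow,
      descPochhammer_natDegree]
    omega
  have hlt : (X ^ m * descPochhammer (ZMod p) m).natDegree < Fintype.card (ZMod p) := by
    rw [hdeg, ZMod.card]; omega
  rw [gaussPoly, iterate_derivative_sum, map_sum, sum_congr rfl fun x _ ↦ hterm x,
    sum_eval_eq_neg_coeff hlt, ZMod.card, ← hdeg, hmonic.coeff_natDegree]

theorem aeval_one_iterate_derivative_kroneckerPoly (hpm : p = 2 * m + 1) :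
    aeval (1 : ZMod p) (derivative^[m] (kroneckerPoly m)) = -1 := by
  have hfactor : (kroneckerPoly m).map (algebraMap ℤ (ZMod p)) =
      (X - C 1) ^ m * ∏ k ∈ range m, -(X ^ (m * (k + 1)) * ∑ i ∈ range (k + 1), X ^ i) := by
    rw [kroneckerPoly, Polynomial.map_prod, ← card_range m, ← prod_const, card_range,
      ← prod_mul_distrib]
    refine prod_congr rfl fun k _ ↦ ?_
    have hgeom := mul_geom_sum (X : (ZMod p)[X]) (k + 1)
    simp only [Polynomial.map_sub, Polynomial.map_pow, map_X, C_1]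
    linear_combination X ^ (m * (k + 1)) * hgeom
  have hprod : m.factorial * ∏ k ∈ range m, (2 * m - k) = (p - 1).factorial := by
    rw [← Nat.descFactorial_eq_prod_range, show p - 1 = 2 * m by omega,
      ← Nat.factorial_mul_descFactorial (show m ≤ 2 * m by omega), show 2 * m - m = m by omega]
  have hneg (k : ℕ) (hk : k ∈ range m) : -((k : ZMod p) + 1) = (2 * m - k : ℕ) := by
    rw [Nat.cast_sub (by grind)]
    have : ((2 * m + 1 : ℕ) : ZMod p) = 0 := by rw [← hpm]; exact ZMod.natCast_self p
    push_cast at this ⊢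
    linear_combination -this
  rw [aeval_iterate_derivative_self _ _ _ hfactor, eval_prod, nsmul_eq_mul]
  simp only [eval_neg, eval_mul, eval_pow, eval_X, one_pow, one_mul, eval_finsetSum, sum_const,
    card_range, nsmul_one, Nat.cast_add, Nat.cast_one]
  rw [prod_congr rfl hneg, ← Nat.cast_prod, ← Nat.cast_mul, hprod, ZMod.wilsons_lemma]

theorem aeval_one_iterate_derivative_eq_zero_of_cyclotomic_dvd {f : ℤ[X]} {k : ℕ}
    (hk : k < p - 1) (hf : cyclotomic p ℤ ∣ f) : aeval (1 : ZMod p) (derivative^[k] f) = 0 := by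
  obtain ⟨g, rfl⟩ := hf
  have hcyc : (cyclotomic p ℤ).map (algebraMap ℤ (ZMod p)) = (X - C 1) ^ (p - 1) := by
    have h := cyclotomic_mul_prime_eq_pow_of_not_dvd (ZMod p) (p := p) (n := 1)
      (Fact.out : p.Prime).not_dvd_one
    rw [map_cyclotomic]
    simpa using h
  refine aeval_iterate_derivative_of_lt (p' := g.map (algebraMap ℤ (ZMod p))) _ _ _ ?_ hk
  rw [Polynomial.map_mul, hcyc]

theorem aeval_gaussPoly {K : Type*} [CommRing K] {ζ : K} (hζ : ζ ^ p = 1) :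
    aeval ζ (gaussPoly p) = gaussSum (legendreChar p K) (AddChar.zmodChar p hζ) := by
  simp [gaussPoly, gaussSum, AddChar.zmodChar_apply]

theorem sq_aeval_kroneckerPoly {K : Type*} [CommRing K] [IsDomain K] {ζ : K}
    (hζ : IsPrimitiveRoot ζ (2 * m + 1)) :
    aeval ζ (kroneckerPoly m) ^ 2 = (-1) ^ m * (2 * m + 1 : ℕ) := by
  have hfactor (k : ℕ) (hk : k ∈ range m) :
      (ζ ^ (m * (k + 1)) - ζ ^ ((m + 1) * (k + 1))) ^ 2 =
        -1 * ((1 - ζ ^ (k + 1)) * (1 - ζ ^ (m + (m - 1 - k) + 1))) := by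
    have hinv : (ζ ^ (m * (k + 1))) ^ 2 * ζ ^ (k + 1) = 1 := by
      rw [← pow_mul, ← pow_add, show m * (k + 1) * 2 + (k + 1) = (2 * m + 1) * (k + 1) by ring,
        pow_mul, hζ.pow_eq_one, one_pow]
    have hpow : ζ ^ (m + (m - 1 - k) + 1) = (ζ ^ (m * (k + 1))) ^ 2 := by
      refine mul_right_cancel₀ (right_ne_zero_of_mul_eq_one hinv) ?_
      rw [hinv, ← pow_add, show m + (m - 1 - k) + 1 + (k + 1) = 2 * m + 1 by grind, hζ.pow_eq_one]
    rw [hpow, show (m + 1) * (k + 1) = m * (k + 1) + (k + 1) by ring, pow_add]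
    linear_combination (ζ ^ (k + 1) - 1) * hinv
  rw [kroneckerPoly, map_prod, ← prod_pow]
  simp only [map_sub, map_pow, aeval_X]
  rw [prod_congr rfl hfactor, prod_mul_distrib, prod_const, card_range, prod_mul_distrib,
    prod_range_reflect (fun k ↦ 1 - ζ ^ (m + k + 1)), ← prod_range_add (fun k ↦ 1 - ζ ^ (k + 1)),
    ← two_mul, hζ.prod_one_sub_pow_eq_order]
  push_cast
  rfl

theorem gaussSum_legendreChar_eq_prod {K : Type*} [Field K] [CharZero K] (hpm : p = 2 * m + 1)
    {ζ : K} (hζ : IsPrimitiveRoot ζ p) :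
    gaussSum (legendreChar p K) (AddChar.zmodChar p hζ.pow_eq_one) =
      ∏ k ∈ range m, (ζ ^ (m * (k + 1)) - ζ ^ ((m + 1) * (k + 1))) := by
  have hp2 : p ≠ 2 := by omega
  have hpos : 0 < p := (Fact.out : p.Prime).pos
  have hm : m < p - 1 := by have := (Fact.out : p.Prime).two_le; omega
  have hsq : aeval ζ (gaussPoly p) ^ 2 = aeval ζ (kroneckerPoly m) ^ 2 := by
    rw [sq_aeval_kroneckerPoly (hpm ▸ hζ), aeval_gaussPoly hζ.pow_eq_one,
      gaussSum_sq (legendreChar_ne_one hp2 K) (legendreChar_isQuadratic K)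
        (AddChar.zmodChar_primitive_of_primitive_root p hζ),
      legendreChar_neg_one hp2, ZMod.card, ← hpm, show p / 2 = m by omega]
  have hne : aeval ζ (gaussPoly p) ≠ -aeval ζ (kroneckerPoly m) := by
    intro heq
    have hdvd : cyclotomic p ℤ ∣ gaussPoly p + kroneckerPoly m := by
      rw [cyclotomic_eq_minpoly hζ hpos]
      exact minpoly.isIntegrallyClosed_dvd (hζ.isIntegral hpos)
        (by rw [map_add, heq, neg_add_cancel])
    have hderiv := aeval_one_iterate_derivative_eq_zero_of_cyclotomic_dvd hm hdvd
    rw [iterate_map_add, map_add, aeval_one_iterate_derivative_gaussPoly hpm,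
      aeval_one_iterate_derivative_kroneckerPoly hpm] at hderiv
    have : Fact (2 < p) := ⟨by omega⟩
    exact ZMod.neg_one_ne_one (n := p) (by linear_combination hderiv)
  rw [← aeval_gaussPoly hζ.pow_eq_one, (sq_eq_sq_iff_eq_or_eq_neg.mp hsq).resolve_right hne]
  simp [kroneckerPoly]

end KroneckerProduct

section GaussSumSign

open Complex Finset
open scoped Real

theorem sum_range_two_mul_add_one (n : ℕ) : ∑ k ∈ range n, (2 * k + 1) = n ^ 2 := by
  induction n with
  | zero => rfl
  | succ n ih => rw [sum_range_succ, ih]; ring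

theorem exp_pow_sub_exp_pow_eq_I_pow_mul_sin (m k : ℕ) :
    exp (2 * π * I / (2 * m + 1 : ℕ)) ^ (m * (k + 1)) -
        exp (2 * π * I / (2 * m + 1 : ℕ)) ^ ((m + 1) * (k + 1)) =
      I ^ (2 * k + 1) * (2 * Real.sin ((k + 1) * (π / (2 * m + 1))) : ℝ) := by
  have hm : (2 * m + 1 : ℂ) ≠ 0 := by exact_mod_cast (2 * m).succ_ne_zero
  set y : ℂ := π / (2 * m + 1) with hy
  have hmy : (2 * m + 1) * y = π := mul_div_cancel₀ _ hm
  have hζ : exp (2 * π * I / (2 * m + 1 : ℕ)) = exp (2 * y * I) := by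
    rw [hy]; push_cast; ring_nf
  have hsign : exp ((k + 1) * (π * I)) = (-1) ^ (k + 1) := by
    rw [← exp_pi_mul_I, ← exp_nat_mul]; push_cast; rfl
  have h₁ : exp (2 * y * I) ^ (m * (k + 1)) = (-1) ^ (k + 1) * exp (-((k + 1) * y) * I) := by
    rw [← hsign, ← exp_nat_mul, ← exp_add]
    congr 1
    push_cast
    linear_combination (k + 1) * I * hmy
  have h₂ : exp (2 * y * I) ^ ((m + 1) * (k + 1)) = (-1) ^ (k + 1) * exp ((k + 1) * y * I) := by
    rw [← hsign, ← exp_nat_mul, ← exp_add]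
    congr 1
    push_cast
    linear_combination (k + 1) * I * hmy
  have hsin : ((2 * Real.sin ((k + 1) * (π / (2 * m + 1))) : ℝ) : ℂ) =
      (exp (-((k + 1) * y) * I) - exp ((k + 1) * y * I)) * I := by
    rw [← two_sin]
    push_cast
    rfl
  rw [hζ, h₁, h₂, hsin, pow_succ I, pow_mul, I_sq]
  linear_combination (-1) ^ k * (exp (-((k + 1) * y) * I) - exp ((k + 1) * y * I)) * (-I_sq)

theorem gaussSum_legendreChar_stdAddChar {p : ℕ} [Fact p.Prime] (hp : p ≠ 2) :
    gaussSum (legendreChar p ℂ) ZMod.stdAddChar = I ^ ((p / 2) ^ 2) * √p := by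
  obtain ⟨m, hpm⟩ := (Fact.out : p.Prime).odd_of_ne_two hp
  have hp2 : p / 2 = m := by omega
  have hζ : IsPrimitiveRoot (exp (2 * π * I / p)) p :=
    isPrimitiveRoot_exp p (NeZero.ne p)
  have hstd : ZMod.stdAddChar = AddChar.zmodChar p hζ.pow_eq_one := by
    ext x
    rw [AddChar.zmodChar_apply, ← exp_nat_mul, ZMod.stdAddChar_apply, ZMod.toCircle_apply]
    ring_nf
  set r := ∏ k ∈ range m, 2 * Real.sin ((k + 1) * (π / (2 * m + 1)))
  have hr0 : 0 < r := by
    refine prod_pos fun k hk ↦ mul_pos two_pos (Real.sin_pos_of_pos_of_lt_pi (by positivity) ?_)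
    have hk : (k + 1 : ℝ) ≤ m := by exact_mod_cast mem_range.mp hk
    rw [mul_div_assoc', div_lt_iff₀ (by positivity), mul_comm]
    gcongr
    linarith
  have hgauss : gaussSum (legendreChar p ℂ) ZMod.stdAddChar = I ^ (m ^ 2) * r := by
    rw [hstd, gaussSum_legendreChar_eq_prod hpm hζ, hpm,
      prod_congr rfl fun k _ ↦ exp_pow_sub_exp_pow_eq_I_pow_mul_sin m k,
      prod_mul_distrib, ← ofReal_prod, prod_pow_eq_pow_sum, sum_range_two_mul_add_one]
  have hsq : r ^ 2 = p := by
    have h := gaussSum_sq (legendreChar_ne_one hp ℂ) (legendreChar_isQuadratic ℂ)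
      (ZMod.isPrimitive_stdAddChar p)
    rw [hgauss, legendreChar_neg_one hp, ZMod.card, hp2, mul_pow, ← pow_mul,
      mul_comm _ 2, pow_mul, I_sq, neg_one_pow_congr (Nat.even_pow' two_ne_zero)] at h
    exact_mod_cast mul_left_cancel₀ (pow_ne_zero m (neg_ne_zero.mpr one_ne_zero)) h
  rw [hgauss, hp2, ← hsq, Real.sqrt_sq hr0.le]

end GaussSumSign

section Polylogarithm

open Complex Set Filter Topology MeasureTheory HurwitzZeta
open scoped Real

theorem one_sub_mul_exp_neg_mem_slitPlane {z : ℂ} (hz : ‖z‖ = 1) (hz1 : z ≠ 1) {t : ℝ}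
    (ht : 0 ≤ t) : 1 - z * exp (-t) ∈ slitPlane := by
  have hre : z.re < 1 := (hz ▸ re_le_norm z).lt_of_ne fun h ↦ hz1 <| by
    rw [eq_coe_norm_of_nonneg (re_eq_norm.mp (h.trans hz.symm)), hz, ofReal_one]
  have hexp := Real.exp_le_one_iff.mpr (neg_nonpos.mpr ht)
  left
  rw [← ofReal_neg, ← ofReal_exp, sub_re, re_mul_ofReal, one_re]
  nlinarith [Real.exp_pos (-t)]

/-- The power series `∑ zⁿ e^{-nt}` over `n ≥ 1` in closed form. Its Mellin transform is `Γ(s)`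
times the polylogarithm `Liₛ(z)`. -/
noncomputable def polylogKernel (z : ℂ) (t : ℝ) : ℂ := z * exp (-t) / (1 - z * exp (-t))

theorem hasSum_polylogKernel {z : ℂ} (hz : ‖z‖ = 1) {t : ℝ} (ht : 0 < t) :
    HasSum (fun n : ℕ ↦ z ^ (n + 1) * Real.exp (-(n + 1) * t)) (polylogKernel z t) := by
  have hlt : ‖z * exp (-t)‖ < 1 := by
    rw [norm_mul, hz, one_mul, ← ofReal_neg, norm_exp_ofReal]
    simpa using ht
  refine ((hasSum_geometric_of_norm_lt_one hlt).mul_left (z * exp (-t))).congr_fun fun n ↦ ?_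
  rw [← pow_succ', mul_pow, ← exp_nat_mul]
  push_cast
  ring_nf

theorem continuousOn_polylogKernel {z : ℂ} (hz : ‖z‖ = 1) (hz1 : z ≠ 1) :
    ContinuousOn (polylogKernel z) (Ici 0) := by
  unfold polylogKernel
  exact ContinuousOn.div (by fun_prop) (by fun_prop) fun t ht ↦
    slitPlane_ne_zero (one_sub_mul_exp_neg_mem_slitPlane hz hz1 ht)

theorem tendsto_mul_exp_neg (z : ℂ) : Tendsto (fun t : ℝ ↦ z * exp (-t)) atTop (𝓝 0) := by
  have h := (tendsto_exp_comap_re_atBot).comp (f := fun t : ℝ ↦ (-t : ℂ)) (x := atTop)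
    (by rw [tendsto_comap_iff]; simpa [Function.comp_def] using tendsto_neg_atTop_atBot)
  simpa using h.const_mul z

theorem isBigO_polylogKernel_atTop (z : ℂ) :
    polylogKernel z =O[atTop] fun t ↦ Real.exp (-1 * t) := by
  have hinv : Tendsto (fun t : ℝ ↦ z / (1 - z * exp (-t))) atTop (𝓝 (z / (1 - 0))) :=
    (tendsto_const_nhds).div ((tendsto_mul_exp_neg z).const_sub 1) (by simp)
  have hexp : (fun t : ℝ ↦ exp (-t)) =O[atTop] fun t ↦ Real.exp (-1 * t) :=
    .of_norm_eventuallyLE (.of_forall fun t ↦ by simp [norm_exp])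
  refine ((hinv.isBigO_one ℝ).mul hexp).congr (fun t ↦ ?_) (fun t ↦ one_mul _)
  rw [polylogKernel, div_mul_eq_mul_div]

theorem differentiableAt_mellin_polylogKernel {z : ℂ} (hz : ‖z‖ = 1) (hz1 : z ≠ 1) {s : ℂ}
    (hs : 0 < s.re) : DifferentiableAt ℂ (mellin (polylogKernel z)) s := by
  have hcont := continuousOn_polylogKernel hz hz1
  refine mellin_differentiableAt_of_isBigO_rpow_exp (b := 0) one_pos
    ((hcont.mono Ioi_subset_Ici_self).locallyIntegrableOn measurableSet_Ioi)
    (isBigO_polylogKernel_atTop z) ?_ hs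
  have hlim : Tendsto (polylogKernel z) (𝓝[>] 0) (𝓝 (polylogKernel z 0)) :=
    (hcont 0 self_mem_Ici).mono Ioi_subset_Ici_self
  simpa using hlim.isBigO_one ℝ

theorem mellin_polylogKernel_one {z : ℂ} (hz : ‖z‖ = 1) (hz1 : z ≠ 1) :
    mellin (polylogKernel z) 1 = -log (1 - z) := by
  have hderiv (t : ℝ) (ht : 0 ≤ t) :
      HasDerivAt (fun t : ℝ ↦ log (1 - z * exp (-t))) (polylogKernel z t) t := by
    have hexp : HasDerivAt (fun t : ℝ ↦ 1 - z * exp (-t)) (z * exp (-t)) t := by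
      have := ((hasDerivAt_id (t : ℂ)).neg.cexp.const_mul z).const_sub 1
      simpa using this.comp_ofReal
    exact hexp.clog_real (one_sub_mul_exp_neg_mem_slitPlane hz hz1 ht)
  have hlim : Tendsto (fun t : ℝ ↦ log (1 - z * exp (-t))) atTop (𝓝 (log (1 - 0))) :=
    ((tendsto_mul_exp_neg z).const_sub 1).clog (by simp)
  have hint : IntegrableOn (polylogKernel z) (Ioi 0) :=
    integrableOn_Ici_iff_integrableOn_Ioi (by finiteness) |>.mp <|
      ((continuousOn_polylogKernel hz hz1).locallyIntegrableOn
        measurableSet_Ici).integrableOn_of_isBigO_atTop (isBigO_polylogKernel_atTop z)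
        ⟨Ioi 1, Ioi_mem_atTop 1, exp_neg_integrableOn_Ioi 1 one_pos⟩
  have hmellin : mellin (polylogKernel z) 1 = ∫ t in Ioi 0, polylogKernel z t := by simp [mellin]
  rw [hmellin, integral_Ioi_of_hasDerivAt_of_tendsto
    (hderiv 0 le_rfl).continuousAt.continuousWithinAt (fun t ht ↦ hderiv t ht.le) hint hlim]
  simp

theorem Gamma_mul_expZeta (a : ℝ) {s : ℂ} (hs : 1 < s.re) :
    Gamma s * expZeta a s = mellin (polylogKernel (exp (2 * π * I * a))) s := by
  set z := exp (2 * π * I * a) with hz_def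
  have hz : ‖z‖ = 1 := by simp [hz_def, norm_exp]
  have hmellin := hasSum_mellin (s := s) (a := fun n : ℕ ↦ z ^ (n + 1)) (p := fun n ↦ n + 1)
    (F := polylogKernel z) (fun n ↦ .inr n.cast_add_one_pos) (by linarith)
    (fun t ht ↦ hasSum_polylogKernel hz ht)
    (by simpa [hz] using (summable_nat_add_iff 1).mpr (Real.summable_one_div_nat_rpow.mpr hs))
  have hseries := hasSum_expZeta_of_one_lt_re a hs
  rw [← hasSum_nat_add_iff' 1] at hseries
  have hs0 : s ≠ 0 := by rintro rfl; simp at hs; linarith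
  refine HasSum.unique ?_ hmellin
  convert! hseries.mul_left (Gamma s) using 2 with n
  · rw [hz_def, ← exp_nat_mul, mul_div_assoc]
    push_cast
    ring_nf
  · simp [hs0]

theorem expZeta_one {a : ℝ} (ha : (a : UnitAddCircle) ≠ 0) :
    expZeta a 1 = -log (1 - exp (2 * π * I * a)) := by
  have hz : ‖exp (2 * π * I * a)‖ = 1 := by simp [norm_exp]
  have hz1 : exp (2 * π * I * a) ≠ 1 := fun h ↦ ha <| by
    obtain ⟨n, hn⟩ := exp_eq_one_iff.mp h
    have han : (a : ℂ) = n := mul_left_cancel₀ two_pi_I_ne_zero (by linear_combination hn)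
    exact (AddCircle.coe_eq_zero_iff 1).mpr ⟨n, by simpa using mod_cast han.symm⟩
  have hleft : ContinuousAt (fun s ↦ Gamma s * expZeta a s) 1 :=
    differentiableAt_Gamma_one.continuousAt.mul
      (differentiableAt_expZeta a 1 (.inr ha)).continuousAt
  have hright : ContinuousAt (mellin (polylogKernel (exp (2 * π * I * a)))) 1 :=
    (differentiableAt_mellin_polylogKernel hz hz1 (by simp)).continuousAt
  have hofReal : Tendsto (fun s : ℝ ↦ (s : ℂ)) (𝓝[>] 1) (𝓝 1) :=
    (continuous_ofReal.tendsto 1).mono_left nhdsWithin_le_nhds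
  have hlim := tendsto_nhds_unique_of_eventuallyEq (hleft.tendsto.comp hofReal)
    (hright.tendsto.comp hofReal)
    (eventually_mem_nhdsWithin.mono fun s hs ↦ Gamma_mul_expZeta a (by simpa using hs))
  rwa [Gamma_one, one_mul, mellin_polylogKernel_one hz hz1] at hlim

theorem log_one_sub_exp_two_pi_mul_I_mul {t : ℝ} (ht0 : 0 < t) (ht1 : t < 1) :
    log (1 - exp (2 * π * I * t)) =
      Real.log (2 * Real.sin (π * t)) + (π * t - π / 2) * I := by
  have hpi := Real.pi_pos
  have hsin : 0 < 2 * Real.sin (π * t) :=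
    mul_pos two_pos (Real.sin_pos_of_pos_of_lt_pi (by positivity) (by nlinarith))
  have hpolar : 1 - exp (2 * π * I * t) =
      exp ((Real.log (2 * Real.sin (π * t)) : ℂ) + (π * t - π / 2) * I) := by
    have hsub : (π * t - π / 2) * I = π * t * I + -(π / 2 * I) := by ring
    have hdouble : 2 * π * I * t = π * t * I + π * t * I := by ring
    rw [exp_add, ← ofReal_exp, Real.exp_log hsin, hsub, exp_add, exp_neg, exp_pi_div_two_mul_I,
      hdouble, exp_add]
    push_cast
    rw [two_sin, neg_mul, exp_neg, inv_I]
    have := exp_ne_zero (π * t * I)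
    field_simp
    linear_combination (1 - exp (π * t * I) ^ 2) * I_sq
  have him : ((Real.log (2 * Real.sin (π * t)) : ℂ) + (π * t - π / 2) * I).im =
      π * t - π / 2 := by
    simp
  rw [hpolar, log_exp] <;> rw [him] <;> nlinarith

end Polylogarithm

section LFunctionOne

open Complex ZMod HurwitzZeta Filter Topology
open scoped Real ComplexOrder

variable {N : ℕ}

theorem LSeries_nonneg_of_isQuadratic {χ : DirichletCharacter ℂ N} (hχ : χ.IsQuadratic) {s : ℝ}
    (hs : 1 < s) : 0 ≤ LSeries (χ ·) s := by
  have hprod := DirichletCharacter.LSeries_eulerProduct χ (s := s) (by simpa using hs)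
  refine ge_of_tendsto hprod (.of_forall fun n ↦ Finset.prod_nonneg fun q hq ↦ ?_)
  have hq : q.Prime := Nat.prime_of_mem_primesBelow hq
  obtain ⟨c, hc⟩ : ∃ c : ℝ, c = (q : ℝ) ^ (-s) := ⟨_, rfl⟩
  have hc0 : 0 ≤ c := hc ▸ by positivity
  have hc1 : c ≤ 1 :=
    hc ▸ Real.rpow_le_one_of_one_le_of_nonpos (mod_cast hq.one_le) (by linarith)
  have hqc : (q : ℂ) ^ (-s : ℂ) = c := by rw [hc, ofReal_cpow q.cast_nonneg]; simp
  rw [inv_nonneg, hqc]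
  rcases hχ q with h | h | h <;> rw [h]
  · simp
  · rw [one_mul]; exact_mod_cast sub_nonneg.mpr hc1
  · rw [neg_one_mul, sub_neg_eq_add]; exact_mod_cast add_nonneg zero_le_one hc0

variable [NeZero N]

theorem LFunction_one_pos_of_isQuadratic {χ : DirichletCharacter ℂ N} (hχ : χ.IsQuadratic)
    (hχ1 : χ ≠ 1) : 0 < DirichletCharacter.LFunction χ 1 := by
  have hlim : Tendsto (fun s : ℝ ↦ DirichletCharacter.LFunction χ s) (𝓝[>] 1)
      (𝓝 (DirichletCharacter.LFunction χ 1)) :=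
    ((DirichletCharacter.differentiable_LFunction hχ1).continuous.comp
      continuous_ofReal).continuousWithinAt
  refine (ge_of_tendsto hlim ?_).lt_of_ne' (DirichletCharacter.LFunction_apply_one_ne_zero hχ1)
  filter_upwards [self_mem_nhdsWithin] with s hs
  rw [DirichletCharacter.LFunction_eq_LSeries χ (by simpa using hs)]
  exact LSeries_nonneg_of_isQuadratic hχ hs

theorem expZeta_toAddCircle_one {j : ZMod N} (hj : j ≠ 0) :
    expZeta (toAddCircle j) 1 =
      -Real.log (2 * Real.sin (π * (j.val / N))) + (π / 2 - π / N * j.val) * I := by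
  have hN : (0 : ℝ) < N := Nat.cast_pos.mpr (NeZero.pos N)
  have hpos : (0 : ℝ) < j.val / N :=
    div_pos (Nat.cast_pos.mpr (Nat.pos_of_ne_zero ((val_ne_zero j).mpr hj))) hN
  have hlt : (j.val / N : ℝ) < 1 := (div_lt_one hN).mpr (Nat.cast_lt.mpr j.val_lt)
  have hcircle : ((j.val / N : ℝ) : UnitAddCircle) ≠ 0 := by
    rwa [← toAddCircle_apply, ne_eq, toAddCircle_eq_zero]
  rw [toAddCircle_apply, expZeta_one hcircle, log_one_sub_exp_two_pi_mul_I_mul hpos hlt]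
  push_cast
  ring

theorem sin_pi_mul_val_neg (j : ZMod N) :
    Real.sin (π * ((-j).val / N)) = Real.sin (π * (j.val / N)) := by
  rcases eq_or_ne j 0 with rfl | hj
  · rw [neg_zero]
  · have := NeZero.mk hj
    rw [val_neg_of_ne_zero, Nat.cast_sub j.val_le, sub_div, div_self (NeZero.ne _), mul_sub,
      mul_one, Real.sin_pi_sub]

theorem LFunction_dft_one_of_odd {Φ : ZMod N → ℂ} (hΦ : Φ.Odd) :
    ZMod.LFunction (ZMod.dft Φ) 1 = π * I / N * ∑ j, Φ j * j.val := by
  have hΦ0 : Φ 0 = 0 := hΦ.map_zero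
  have hlog : ∑ j, Φ j * (Real.log (2 * Real.sin (π * (j.val / N))) : ℂ) = 0 :=
    Function.Odd.sum_eq_zero fun j ↦ by rw [hΦ, sin_pi_mul_val_neg, neg_mul]
  have hterm (j : ZMod N) : Φ (-j) * expZeta (toAddCircle (- -j)) 1 =
      Φ j * (Real.log (2 * Real.sin (π * (j.val / N))) : ℂ) - π * I / 2 * Φ j +
        π * I / N * (Φ j * j.val) := by
    rcases eq_or_ne j 0 with rfl | hj
    · simp [hΦ0]
    · rw [hΦ, neg_neg, expZeta_toAddCircle_one hj]
      ring
  rw [LFunction_dft Φ (.inl hΦ0), ← Equiv.sum_comp (Equiv.neg _)]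
  simp only [Equiv.neg_apply, hterm]
  rw [Finset.sum_add_distrib, Finset.sum_sub_distrib, hlog, ← Finset.mul_sum, hΦ.sum_eq_zero,
    ← Finset.mul_sum]
  ring

theorem gaussSum_mul_LFunction_inv_one {χ : DirichletCharacter ℂ N} (hχ : χ.IsPrimitive)
    (hodd : χ.Odd) :
    gaussSum χ stdAddChar * DirichletCharacter.LFunction χ⁻¹ 1 =
      -(π * I / N) * ∑ j, χ j * j.val := by
  have hinv : χ⁻¹ (-1) = -1 := by
    rw [MulChar.inv_apply_eq_inv', hodd, inv_neg, inv_one]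
  have hdft : ZMod.dft χ = fun j ↦ -gaussSum χ stdAddChar * χ⁻¹ j := by
    ext j
    rw [hχ.fourierTransform_eq_inv_mul_gaussSum, DirichletCharacter.Odd.eval_neg _ j hinv]
    ring
  have hL : ZMod.LFunction (ZMod.dft χ) 1 =
      -gaussSum χ stdAddChar * DirichletCharacter.LFunction χ⁻¹ 1 := by
    simp only [hdft, DirichletCharacter.LFunction, ZMod.LFunction, Finset.mul_sum]
    congr! 1 with j
    ring
  linear_combination hL - LFunction_dft_one_of_odd hodd.to_fun

theorem isPrimitive_of_ne_one {p : ℕ} [Fact p.Prime] {R : Type*} [CommMonoidWithZero R]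
    {χ : DirichletCharacter R p} (hχ : χ ≠ 1) : χ.IsPrimitive :=
  ((Nat.dvd_prime Fact.out).mp χ.conductor_dvd_level).resolve_left
    (mt χ.eq_one_iff_conductor_eq_one.mpr hχ)

theorem sum_quadraticChar_mul_val_neg {p : ℕ} [Fact p.Prime] (hp : p % 4 = 3) :
    ∑ x : ZMod p, quadraticChar (ZMod p) x * (x.val : ℤ) < 0 := by
  have hp2 : p ≠ 2 := by omega
  have hquad := legendreChar_isQuadratic ℂ (p := p)
  have hne := legendreChar_ne_one hp2 ℂ
  have hodd : (legendreChar p ℂ).Odd := by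
    rw [DirichletCharacter.Odd, legendreChar_neg_one hp2, Odd.neg_one_pow (by grind)]
  have hgauss : gaussSum (legendreChar p ℂ) stdAddChar = I * √p := by
    have hmod : (p / 2) ^ 2 % 4 = 1 := by
      obtain ⟨c, hc⟩ : ∃ c, p = 4 * c + 3 := ⟨p / 4, by omega⟩
      rw [show p / 2 = 2 * c + 1 by omega]
      ring_nf
      omega
    rw [gaussSum_legendreChar_stdAddChar hp2, I_pow_eq_pow_mod, hmod, pow_one]
  have hformula := gaussSum_mul_LFunction_inv_one (isPrimitive_of_ne_one hne) hodd
  rw [hgauss, hquad.inv] at hformula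
  have hL := (Complex.pos_iff.mp (LFunction_one_pos_of_isQuadratic hquad hne)).1
  set T := ∑ x : ZMod p, quadraticChar (ZMod p) x * (x.val : ℤ) with hT
  have hcast : ∑ x, legendreChar p ℂ x * x.val = T := by
    rw [hT]
    push_cast
    rfl
  have hreal : √p * (DirichletCharacter.LFunction (legendreChar p ℂ) 1).re = -(π / p) * T := by
    rw [hcast] at hformula
    simpa using congrArg im hformula
  have hlhs := mul_pos (Real.sqrt_pos.mpr (Nat.cast_pos.mpr (Fact.out : p.Prime).pos)) hL
  rw [hreal, neg_mul, neg_pos] at hlhs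
  exact Int.cast_lt_zero.mp (neg_of_mul_neg_right hlhs (by positivity))

end LFunctionOne

section Counting

open Finset

theorem val_two_mul {N : ℕ} [NeZero N] (hN : Odd N) (x : ZMod N) :
    2 * x.val = (2 * x).val + if Odd (2 * x).val then N else 0 := by
  have hx := x.val_lt
  have hmod : (2 * x).val = 2 * x.val % N := by
    rw [two_mul, ZMod.val_add, ← two_mul]
  obtain ⟨n, hn⟩ := hN
  rcases lt_or_ge (2 * x.val) N with h | h
  · have hval : (2 * x).val = 2 * x.val := by rw [hmod, Nat.mod_eq_of_lt h]
    rw [if_neg (by grind), hval, add_zero]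
  · have hval : (2 * x).val = 2 * x.val - N := by
      rw [hmod, Nat.mod_eq_sub_mod h, Nat.mod_eq_of_lt (by omega)]
    rw [if_pos (by grind), hval]
    omega

theorem two_mul_apply_two_sub_one_mul_sum_mul_val {N : ℕ} [NeZero N] (hN : Odd N)
    {R : Type*} [CommRing R] (χ : MulChar (ZMod N) R) :
    (2 * χ 2 - 1) * ∑ x, χ x * x.val = N * ∑ x with Odd x.val, χ x := by
  have h2 : IsUnit (2 : ZMod N) := by
    exact_mod_cast (ZMod.isUnit_iff_coprime 2 N).mpr hN.coprime_two_left
  have hval (x : ZMod N) : 2 * χ 2 * (χ x * x.val) =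
      χ (2 * x) * (2 * x).val + N * if Odd (2 * x).val then χ (2 * x) else 0 := by
    have h := congrArg (Nat.cast (R := R)) (val_two_mul hN x)
    rw [map_mul]
    split_ifs at h ⊢ <;> push_cast at h <;> linear_combination χ 2 * χ x * h
  have hdouble : 2 * χ 2 * ∑ x, χ x * x.val =
      ∑ x, χ x * x.val + N * ∑ x with Odd x.val, χ x := by
    simp_rw [mul_sum _ _ (2 * χ 2), hval]
    rw [(IsUnit.isUnit_iff_mulLeft_bijective.mp h2).sum_comp
        fun y ↦ χ y * y.val + N * if Odd y.val then χ y else 0,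
      sum_add_distrib, ← mul_sum, sum_filter]
  linear_combination hdouble

theorem exists_mul_self_mod_eq_iff_isSquare {N : ℕ} [NeZero N] {k : ℕ} :
    (∃ x ∈ range N, x * x % N = k % N) ↔ IsSquare (k : ZMod N) := by
  simp only [← ZMod.natCast_eq_natCast_iff', Nat.cast_mul]
  constructor
  · rintro ⟨x, -, hx⟩
    exact ⟨x, hx.symm⟩
  · rintro ⟨y, hy⟩
    exact ⟨y.val, mem_range.mpr y.val_lt, by rw [ZMod.natCast_zmod_val, hy]⟩

variable {p : ℕ} [Fact p.Prime]

theorem card_residue_eq_card_quadraticChar_eq_one (P : ℕ → Prop) [DecidablePred P] :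
    #{k ∈ Icc 1 (p - 1) | P k ∧ ∃ x ∈ range p, x * x % p = k % p} =
      #{x : ZMod p | P x.val ∧ quadraticChar (ZMod p) x = 1} := by
  have hval {k : ℕ} (hk : k ∈ Icc 1 (p - 1)) : (k : ZMod p).val = k :=
    ZMod.val_cast_of_lt (by grind)
  refine card_nbij' (fun k ↦ (k : ZMod p)) ZMod.val (fun k hk ↦ ?_) (fun x hx ↦ ?_)
    (fun k hk ↦ hval (mem_filter.mp hk).1) (fun x _ ↦ ZMod.natCast_zmod_val x)
  · obtain ⟨hk, hP, hsq⟩ := mem_filter.mp hk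
    have hk0 : (k : ZMod p) ≠ 0 := by rw [← ZMod.val_ne_zero, hval hk]; grind
    exact mem_filter.mpr ⟨mem_univ _, by rwa [hval hk], (quadraticChar_one_iff_isSquare hk0).mpr
      (exists_mul_self_mod_eq_iff_isSquare.mp hsq)⟩
  · obtain ⟨-, hP, hχ⟩ := mem_filter.mp hx
    have hx0 : x ≠ 0 := by rintro rfl; simp at hχ
    have hpos := Nat.pos_of_ne_zero ((ZMod.val_ne_zero x).mpr hx0)
    have hlt := x.val_lt
    refine mem_filter.mpr ⟨mem_Icc.mpr ⟨hpos, by omega⟩, hP, ?_⟩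
    rwa [exists_mul_self_mod_eq_iff_isSquare, ZMod.natCast_zmod_val,
      ← quadraticChar_one_iff_isSquare hx0]

theorem card_even_eq_one_eq_card_odd_eq_neg_one {N : ℕ} [NeZero N] (hN : Odd N)
    {χ : MulChar (ZMod N) ℤ} (hχ : χ (-1) = -1) :
    #{x : ZMod N | Even x.val ∧ χ x = 1} = #{x : ZMod N | Odd x.val ∧ χ x = -1} := by
  have hneg (x : ZMod N) : χ (-x) = -χ x := by rw [← neg_one_mul, map_mul, hχ, neg_one_mul]
  have hχ0 : χ 0 = 0 := Function.Odd.map_zero hneg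
  have hparity {x : ZMod N} (hx : x ≠ 0) : Odd (-x).val ↔ Even x.val := by
    have := NeZero.mk hx
    have := x.val_lt
    rw [ZMod.val_neg_of_ne_zero]
    grind
  refine card_nbij' Neg.neg Neg.neg (fun x hx ↦ ?_) (fun x hx ↦ ?_)
    (fun x _ ↦ neg_neg x) (fun x _ ↦ neg_neg x)
  · obtain ⟨-, heven, hx1⟩ := mem_filter.mp hx
    have hx0 : x ≠ 0 := by rintro rfl; simp [hχ0] at hx1
    exact mem_filter.mpr ⟨mem_univ _, (hparity hx0).mpr heven, by rw [hneg, hx1]⟩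
  · obtain ⟨-, hodd, hx1⟩ := mem_filter.mp hx
    have hx0 : x ≠ 0 := by rintro rfl; simp [hχ0] at hx1
    exact mem_filter.mpr ⟨mem_univ _, (hparity (neg_ne_zero.mpr hx0)).mp (by rwa [neg_neg]),
      by rw [hneg, hx1, neg_neg]⟩

theorem sum_eq_card_eq_one_sub_card_eq_neg_one {α : Type*} [CommMonoid α] {χ : MulChar α ℤ}
    (hχ : χ.IsQuadratic) (s : Finset α) :
    ∑ x ∈ s, χ x = #{x ∈ s | χ x = 1} - #{x ∈ s | χ x = -1} := by
  simp only [card_filter, Nat.cast_sum, ← sum_sub_distrib]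
  refine sum_congr rfl fun x _ ↦ ?_
  rcases hχ x with h | h | h <;> simp [h]

theorem qo_sub_qe_eq_sum_quadraticChar (hp : p % 4 = 3) :
    (qo p - qe p : ℤ) = ∑ x : ZMod p with Odd x.val, quadraticChar (ZMod p) x := by
  have hneg : quadraticChar (ZMod p) (-1) = -1 := by
    rw [quadraticChar_neg_one ((ZMod.ringChar_zmod_n p).trans_ne (by omega)), ZMod.card,
      ZMod.χ₄_nat_three_mod_four hp]
  rw [qo, qe, card_residue_eq_card_quadraticChar_eq_one, card_residue_eq_card_quadraticChar_eq_one,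
    card_even_eq_one_eq_card_odd_eq_neg_one (Nat.odd_iff.mpr (by omega)) hneg,
    sum_eq_card_eq_one_sub_card_eq_neg_one (quadraticChar_isQuadratic _),
    filter_filter, filter_filter]

end Counting

theorem qo_qe_comparison (p : ℕ) (hp : p.Prime) (h3 : p % 4 = 3) :
    (p % 8 = 3 → qo p > qe p) ∧ (p % 8 = 7 → qe p > qo p) := by
  have : Fact p.Prime := ⟨hp⟩
  have hp0 : (0 : ℤ) < p := Nat.cast_pos.mpr hp.pos
  have hneg := sum_quadraticChar_mul_val_neg h3
  have hdouble := two_mul_apply_two_sub_one_mul_sum_mul_val (Nat.odd_iff.mpr (by omega))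
    (quadraticChar (ZMod p))
  rw [← qo_sub_qe_eq_sum_quadraticChar h3] at hdouble
  have htwo : quadraticChar (ZMod p) 2 = ZMod.χ₈ p := by
    rw [quadraticChar_two ((ZMod.ringChar_zmod_n p).trans_ne (by omega)), ZMod.card]
  rw [htwo, ZMod.χ₈_nat_eq_if_mod_eight] at hdouble
  refine ⟨fun h8 ↦ ?_, fun h8 ↦ ?_⟩
  · rw [if_neg (by omega), if_neg (by omega)] at hdouble
    have hpos : (0 : ℤ) < p * (qo p - qe p) := by linarith
    have := pos_of_mul_pos_right hpos hp0.le
    omega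
  · rw [if_neg (by omega), if_pos (by omega)] at hdouble
    have hpos : (0 : ℤ) < p * (qe p - qo p) := by linarith
    have := pos_of_mul_pos_right hpos hp0.le
    omega
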